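/- arXiv:1412.4837 — 3 statements merged into one kernel-verified Lean document; each statement's English description precedes it below -/
import Mathlib

section
/- (Burning test for the sinkless sandpile model.) A chip configuration c is recurrent if and only if there exists a finite sequence of legal firing moves leading from c back to c in which every vertex v ∈ V is fired exactly r(v) times, where r is the primitive period vector of G. -/
open Finset Polynomial

namespace SandpileBM

variable {V E : Type} [Fintype V] [DecidableEq V] [Fintype E] [DecidableEq E]

/-- The number of edges from `v` to `w` in the multigraph given by `src`, `tgt`. -/
def numEdges (src tgt : E → V) (v w : V) : ℕ :=
  (Finset.univ.filter fun e => src e = v ∧ tgt e = w).card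

/-- The out-degree of a vertex. -/
def outdeg (src : E → V) (v : V) : ℕ :=
  (Finset.univ.filter fun e => src e = v).card

/-- The in-degree of a vertex. -/
def indeg (tgt : E → V) (v : V) : ℕ :=
  (Finset.univ.filter fun e => tgt e = v).card

/-- The digraph is strongly connected: any vertex is reachable from any other by
a directed path. -/
def StronglyConnected (src tgt : E → V) : Prop :=
  ∀ v w : V, Relation.ReflTransGen (fun a b => ∃ e : E, src e = a ∧ tgt e = b) v w

/-- Result of firing the vertex `v` on the chip configuration `c` (sinkless model). -/
def fire (src tgt : E → V) (c : V → ℕ) (v : V) : V → ℕ :=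
  fun w => c w + numEdges src tgt v w - (if w = v then outdeg src v else 0)

/-- One legal firing move in the sinkless model. -/
def FireStep (src tgt : E → V) (c d : V → ℕ) : Prop :=
  ∃ v : V, outdeg src v ≤ c v ∧ d = fire src tgt c v

/-- `Reach c d`: `d` is obtained from `c` by a finite sequence of legal firing moves. -/
def Reach (src tgt : E → V) : (V → ℕ) → (V → ℕ) → Prop :=
  Relation.ReflTransGen (FireStep src tgt)

/-- Stability of a chip configuration. -/
def Stable (src : E → V) (c : V → ℕ) : Prop :=
  ∀ v : V, c v < outdeg src v

/-- A chip configuration is recurrent if it is not stable and every configuration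
accessible from it can reach it back. -/
def Recurrent (src tgt : E → V) (c : V → ℕ) : Prop :=
  ¬ Stable src c ∧ ∀ d : V → ℕ, Reach src tgt c d → Reach src tgt d c

/-- Level (total number of chips) of a chip configuration. -/
def lvl (c : V → ℕ) : ℕ := ∑ v : V, c v

/-- Indicator function of the vertex `s`. -/
def deltaS (s : V) : V → ℕ := fun v => if v = s then 1 else 0

/-- Result of firing the vertex `v` on an `s`-configuration. -/
def sfire (src tgt : E → V) (s : V) (c : {v : V // v ≠ s} → ℕ) (v : {v : V // v ≠ s}) :
    {v : V // v ≠ s} → ℕ :=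
  fun w => c w + numEdges src tgt v.1 w.1 - (if w = v then outdeg src v.1 else 0)

/-- One legal s-firing move. -/
def SFireStep (src tgt : E → V) (s : V) (c d : {v : V // v ≠ s} → ℕ) : Prop :=
  ∃ v : {v : V // v ≠ s}, outdeg src v.1 ≤ c v ∧ d = sfire src tgt s c v

/-- `SReach c d`: `d` is obtained from `c` by a finite sequence of legal s-firing moves. -/
def SReach (src tgt : E → V) (s : V) :
    ({v : V // v ≠ s} → ℕ) → ({v : V // v ≠ s} → ℕ) → Prop :=
  Relation.ReflTransGen (SFireStep src tgt s)

/-- Stability of an `s`-configuration. -/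
def SStable (src : E → V) (s : V) (c : {v : V // v ≠ s} → ℕ) : Prop :=
  ∀ v : {v : V // v ≠ s}, c v < outdeg src v.1

/-- The stabilization `c°` of an `s`-configuration: the (for strongly connected digraphs,
unique) stable `s`-configuration reachable from `c` by legal s-firing moves. -/
noncomputable def stab (src tgt : E → V) (s : V) (c : {v : V // v ≠ s} → ℕ) :
    {v : V // v ≠ s} → ℕ :=
  Classical.epsilon fun d => SReach src tgt s c d ∧ SStable src s d

/-- An `s`-configuration `c` is s-recurrent if every `s`-configuration can be completed
to one whose stabilization is `c`. -/
def SRecurrent (src tgt : E → V) (s : V) (c : {v : V // v ≠ s} → ℕ) : Prop :=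
  ∀ c₁ : {v : V // v ≠ s} → ℕ, ∃ c₂ : {v : V // v ≠ s} → ℕ,
    stab src tgt s (c₁ + c₂) = c

/-- `β_s`, recording the number of edges from `s` to each other vertex. -/
def betaS (src tgt : E → V) (s : V) : {v : V // v ≠ s} → ℕ :=
  fun v => numEdges src tgt s v.1

/-- The relation `~_s` on s-recurrent configurations: `d = (c + k·β_s)°` for some `k`. -/
def SEquiv (src tgt : E → V) (s : V) (c d : {v : V // v ≠ s} → ℕ) : Prop :=
  ∃ k : ℕ, stab src tgt s (c + k • betaS src tgt s) = d

/-- Restriction of a chip configuration to `V ∖ {s}`. -/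
def restrictS (s : V) (c : V → ℕ) : {v : V // v ≠ s} → ℕ := fun v => c v.1

/-- Extension `c̄` of an `s`-configuration by `0` at `s`. -/
def extendS (s : V) (c : {v : V // v ≠ s} → ℕ) : V → ℕ :=
  fun v => if h : v = s then 0 else c ⟨v, h⟩

/-- The s-index `χ(c)`: the least `k` such that `c̄ + k·δ_s` is recurrent. -/
noncomputable def sIndex (src tgt : E → V) (s : V) (c : {v : V // v ≠ s} → ℕ) : ℕ :=
  sInf {k : ℕ | Recurrent src tgt (extendS s c + k • deltaS s)}

/-- `φ(c) := c̄ + χ(c)·δ_s`. -/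
noncomputable def phi (src tgt : E → V) (s : V) (c : {v : V // v ≠ s} → ℕ) : V → ℕ :=
  extendS s c + sIndex src tgt s c • deltaS s

/-- The s-level `slvl(c) := χ(c) + Σ_{v ≠ s} c(v)`. -/
noncomputable def slvl (src tgt : E → V) (s : V) (c : {v : V // v ≠ s} → ℕ) : ℕ :=
  sIndex src tgt s c + ∑ v : {v : V // v ≠ s}, c v

/-- The d-level `dlvl(c) := deg⁺(s) + Σ_{v ≠ s} c(v)`. -/
def dlvl (src : E → V) (s : V) (c : {v : V // v ≠ s} → ℕ) : ℕ :=
  outdeg src s + ∑ v : {v : V // v ≠ s}, c v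

/-- The set (as a type) of recurrent chip configurations. -/
abbrev RecL (src tgt : E → V) := {c : V → ℕ // Recurrent src tgt c}

/-- The setoid on recurrent configurations generated by the relation `~` (i.e. `⤳`). -/
def recLSetoid (src tgt : E → V) : Setoid (RecL src tgt) :=
  Relation.EqvGen.setoid fun a b => Reach src tgt a.1 b.1

/-- The set of `~`-classes of recurrent configurations. -/
abbrev RecLQuot (src tgt : E → V) := Quotient (recLSetoid src tgt)

/-- The set (as a type) of s-recurrent configurations. -/
abbrev RecS (src tgt : E → V) (s : V) := {c : {v : V // v ≠ s} → ℕ // SRecurrent src tgt s c}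

/-- The setoid on s-recurrent configurations generated by the relation `~_s`. -/
def recSSetoid (src tgt : E → V) (s : V) : Setoid (RecS src tgt s) :=
  Relation.EqvGen.setoid fun a b => SEquiv src tgt s a.1 b.1

/-- The set of `~_s`-classes of s-recurrent configurations. -/
abbrev RecSQuot (src tgt : E → V) (s : V) := Quotient (recSSetoid src tgt s)

/-- The level of a `~`-class of recurrent configurations (level is constant on classes). -/
noncomputable def lvlClass (src tgt : E → V) (q : RecLQuot src tgt) : ℕ :=
  sSup ((fun c : RecL src tgt => lvl c.1) '' {c | Quotient.mk (recLSetoid src tgt) c = q})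

/-- The s-level of a `~_s`-class (s-level is constant on classes). -/
noncomputable def slvlClass (src tgt : E → V) (s : V) (q : RecSQuot src tgt s) : ℕ :=
  sSup ((fun c : RecS src tgt s => slvl src tgt s c.1) ''
    {c | Quotient.mk (recSSetoid src tgt s) c = q})

/-- The d-level of a `~_s`-class: the maximum d-level over the class. -/
noncomputable def dlvlClass (src tgt : E → V) (s : V) (q : RecSQuot src tgt s) : ℕ :=
  sSup ((fun c : RecS src tgt s => dlvl src s c.1) ''
    {c | Quotient.mk (recSSetoid src tgt s) c = q})

/-- The Biggs–Merino polynomial `B(G,s;y) = Σ_{[c] ∈ Rec(G,s)/~_s} y^{dlvl([c])}`. -/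
noncomputable def BM (src tgt : E → V) (s : V) : Polynomial ℤ :=
  ∑ᶠ q : RecSQuot src tgt s, X ^ dlvlClass src tgt s q

/-- `LegalSeq l c d`: firing the vertices in the list `l` in order is a sequence of
legal firing moves transforming `c` into `d` (sinkless model). -/
def LegalSeq (src tgt : E → V) : List V → (V → ℕ) → (V → ℕ) → Prop
  | [], c, d => d = c
  | v :: l, c, d => outdeg src v ≤ c v ∧ LegalSeq src tgt l (fire src tgt c v) d

/-- `SLegalSeq l c d`: firing the vertices in the list `l` in order is a sequence of
legal s-firing moves transforming `c` into `d`. -/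
def SLegalSeq (src tgt : E → V) (s : V) :
    List {v : V // v ≠ s} → ({v : V // v ≠ s} → ℕ) → ({v : V // v ≠ s} → ℕ) → Prop
  | [], c, d => d = c
  | v :: l, c, d => outdeg src v.1 ≤ c v ∧ SLegalSeq src tgt s l (sfire src tgt s c v) d

/-- The configuration obtained from `c` after firing the vertices of `l` in order. -/
def iterFire (src tgt : E → V) (c : V → ℕ) (l : List V) : V → ℕ :=
  l.foldl (fire src tgt) c

/-- The Laplacian of the digraph applied to an integer vector:
`(Δq)(v) = deg⁺(v)·q(v) − Σ_w A(w,v)·q(w)`. -/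
def lapApply (src tgt : E → V) (q : V → ℤ) : V → ℤ :=
  fun v => (outdeg src v : ℤ) * q v - ∑ w : V, (numEdges src tgt w v : ℤ) * q w

/-- `r` is the primitive period vector of the digraph: it has positive entries with
gcd `1`, lies in the kernel of the Laplacian, and generates this kernel. -/
def IsPeriodVector (src tgt : E → V) (r : V → ℕ) : Prop :=
  (∀ v : V, 0 < r v) ∧ Finset.univ.gcd r = 1 ∧
    lapApply src tgt (fun v => (r v : ℤ)) = 0 ∧
    ∀ q : V → ℤ, lapApply src tgt q = 0 → ∃ k : ℤ, q = k • fun v => (r v : ℤ)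

/-- The Laplacian matrix of the digraph. -/
def lapMatrix (src tgt : E → V) : Matrix V V ℤ :=
  Matrix.of fun v w =>
    if v = w then (outdeg src v : ℤ) - numEdges src tgt v v
    else -(numEdges src tgt w v : ℤ)

/-- The determinant of the reduced Laplacian obtained by deleting the row and
column indexed by `v`. -/
def reducedLapDet (src tgt : E → V) (v : V) : ℤ :=
  (((lapMatrix src tgt).submatrix (fun a : {w : V // w ≠ v} => a.1)
    (fun a : {w : V // w ≠ v} => a.1)).det)

/-- The period constant `α := gcd_{v ∈ V} det Δ_v`. -/
def periodConstant (src tgt : E → V) : ℤ :=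
  Finset.univ.gcd (reducedLapDet src tgt)

/-- `IsWalk l a b`: the list of edges `l` forms a directed walk from `a` to `b`. -/
def IsWalk (src tgt : E → V) : List E → V → V → Prop
  | [], a, b => a = b
  | e :: l, a, b => src e = a ∧ IsWalk src tgt l (tgt e) b

/-- `IsPath l a b`: the list of edges `l` forms a directed path from `a` to `b`:
all visited vertices are distinct (except that the final vertex is allowed to
coincide with the starting vertex). -/
def IsPath (src tgt : E → V) (l : List E) (a b : V) : Prop :=
  IsWalk src tgt l a b ∧ (l.map tgt).Nodup ∧ a ∉ (l.map tgt).dropLast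

/-- `T` is an arborescence rooted at `s`: for every vertex `v` there is a unique
directed path from `s` to `v` using only edges of `T`. -/
def IsArborescence (src tgt : E → V) (s : V) (T : Finset E) : Prop :=
  ∀ v : V, ∃! l : List E, (∀ e ∈ l, e ∈ T) ∧ IsPath src tgt l s v

/-- The edge `e ∉ T` is externally active for the arborescence `T` (w.r.t. the linear
order on `E`): where `P₁`, `P₂` are the two edge-disjoint directed paths in `T ∪ {e}`
sharing their starting vertex and ending at `tgt e`, with `e ∈ P₁`, the smallest edge
on `P₁ ++ P₂` lies on `P₁`. -/
def ExtActive [LinearOrder E] (src tgt : E → V) (T : Finset E) (e : E) : Prop :=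
  e ∉ T ∧ ∃ (u : V) (p₁ p₂ : List E),
    (∀ f ∈ p₁, f ∈ T ∨ f = e) ∧ (∀ f ∈ p₂, f ∈ T ∨ f = e) ∧
    IsPath src tgt p₁ u (tgt e) ∧ IsPath src tgt p₂ u (tgt e) ∧
    e ∈ p₁ ∧ (∀ f ∈ p₁, f ∉ p₂) ∧
    ∃ fmin ∈ p₁, ∀ f ∈ p₁ ++ p₂, fmin ≤ f

/-- The external activity `e(T)` of an arborescence `T`. -/
noncomputable def extActivity [LinearOrder E] (src tgt : E → V) (T : Finset E) : ℕ :=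
  Nat.card {e : E // ExtActive src tgt T e}

/-- The greedoid Tutte polynomial `T(G,s;y) = Σ_{T ∈ A(G,s)} y^{e(T)}`. -/
noncomputable def greedoidTutte [LinearOrder E] (src tgt : E → V) (s : V) : Polynomial ℤ :=
  ∑ᶠ T : {T : Finset E // IsArborescence src tgt s T}, X ^ extActivity src tgt T.1

/-- `f` is a `G^r`-parking function rooted at `s`. -/
def IsParking (src tgt : E → V) (s : V) (f : {v : V // v ≠ s} → ℕ) : Prop :=
  ∀ A : Finset {v : V // v ≠ s}, A.Nonempty →
    ∃ v ∈ A, f v < Nat.card {e : E // (∀ w ∈ A, src e ≠ w.1) ∧ tgt e = v.1}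

/-- The d-level of a `G^r`-parking function: `|E| − |V| + 1 − Σ_{v≠s} f(v)`. -/
noncomputable def parkDlvl (src : E → V) (s : V) (f : {v : V // v ≠ s} → ℕ) : ℕ :=
  ((Fintype.card E : ℤ) - Fintype.card V + 1 - ∑ v : {v : V // v ≠ s}, (f v : ℤ)).toNat

/-- `σ` is an s-decreasing traversal: a sequence in which every vertex and edge of `G`
appears exactly once, satisfying (R1) every vertex other than `s` is immediately
preceded by an edge targeting it, and (R2) every edge is the `<ₑ`-maximum edge not yet
seen whose source has been seen. -/
def IsTraversal [LinearOrder E] (src tgt : E → V) (s : V) (σ : List (V ⊕ E)) : Prop :=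
  σ.Nodup ∧ (∀ x : V ⊕ E, x ∈ σ) ∧
  (∀ (i : ℕ) (hi : i < σ.length) (v : V),
      σ.get ⟨i, hi⟩ = Sum.inl v → v ≠ s →
      0 < i ∧ ∃ e : E, tgt e = v ∧ σ.get ⟨i - 1, by omega⟩ = Sum.inr e) ∧
  (∀ (i : ℕ) (hi : i < σ.length) (e : E),
      σ.get ⟨i, hi⟩ = Sum.inr e →
      Sum.inl (src e) ∈ σ.take i ∧
      ∀ f : E, Sum.inr f ∉ σ.take i → Sum.inl (src f) ∈ σ.take i → f ≤ e)

open scoped Classical in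
/-- `Υ(σ)`: the set of edges immediately preceding a non-sink vertex in `σ`. -/
noncomputable def Upsilon (src tgt : E → V) (s : V) (σ : List (V ⊕ E)) : Finset E :=
  Finset.univ.filter fun e =>
    ∃ (i : ℕ) (hi : i < σ.length) (v : V), v ≠ s ∧ σ.get ⟨i, hi⟩ = Sum.inl v ∧
      0 < i ∧ ∃ hj : i - 1 < σ.length, σ.get ⟨i - 1, hj⟩ = Sum.inr e

/-- The strength of `σ`: the number of strong edges, i.e. edges whose target appears
before them in `σ`. -/
noncomputable def strength (tgt : E → V) (σ : List (V ⊕ E)) : ℕ :=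
  Nat.card {e : E // ∃ (i : ℕ) (hi : i < σ.length),
    σ.get ⟨i, hi⟩ = Sum.inr e ∧ Sum.inl (tgt e) ∈ σ.take i}

/-- `Ψ(σ)(v)`: one less than the number of edges targeting `v` that appear before the
vertex `v` in `σ`. -/
def Psi (tgt : E → V) (s : V) (σ : List (V ⊕ E)) : {v : V // v ≠ s} → ℕ :=
  fun v =>
    (((σ.takeWhile fun x => x ≠ Sum.inl v.1).filterMap Sum.getRight?).filter
      fun e => tgt e = v.1).length - 1

theorem lapApply_add (src tgt : E → V) (p q : V → ℤ) :
    lapApply src tgt (p + q) = lapApply src tgt p + lapApply src tgt q := by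
  funext v
  simp only [lapApply, Pi.add_apply, mul_add, Finset.sum_add_distrib]
  ring

theorem lapApply_zsmul (src tgt : E → V) (k : ℤ) (q : V → ℤ) :
    lapApply src tgt (k • q) = k • lapApply src tgt q := by
  funext v
  simp only [lapApply, Pi.smul_apply, smul_eq_mul, mul_sub, Finset.mul_sum]
  congr 1
  · ring
  · exact Finset.sum_congr rfl fun w _ => by ring

theorem lapApply_single (src tgt : E → V) (a w : V) :
    lapApply src tgt (Pi.single a 1) w
      = (if w = a then (outdeg src a : ℤ) else 0) - numEdges src tgt a w := by
  have h : ∑ x : V, (numEdges src tgt x w : ℤ) * (Pi.single a (1 : ℤ) : V → ℤ) x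
      = numEdges src tgt a w := by
    rw [Finset.sum_eq_single a]
    · simp
    · intro b _ hb
      simp [Pi.single_apply, hb]
    · simp
  simp only [lapApply, h]
  simp only [Pi.single_apply]
  split_ifs with hw
  · subst hw; ring
  · ring

theorem fire_cast (src tgt : E → V) (c : V → ℕ) (a : V) (ha : outdeg src a ≤ c a) (w : V) :
    (fire src tgt c a w : ℤ) = c w - lapApply src tgt (Pi.single a 1) w := by
  rw [lapApply_single]
  simp only [fire]
  split_ifs with h
  · subst h; omega
  · push_cast; omega

theorem fire_mono (src tgt : E → V) (c : V → ℕ) (a w : V) (h : w ≠ a) :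
    c w ≤ fire src tgt c a w := by
  simp [fire, h]

theorem fire_comm (src tgt : E → V) (c : V → ℕ) (a b : V) (hab : a ≠ b)
    (ha : outdeg src a ≤ c a) (hb : outdeg src b ≤ c b) :
    fire src tgt (fire src tgt c a) b = fire src tgt (fire src tgt c b) a := by
  funext w
  have h1 := fire_cast src tgt (fire src tgt c a) b
    (hb.trans (fire_mono src tgt c a b hab.symm)) w
  have h2 := fire_cast src tgt (fire src tgt c b) a
    (ha.trans (fire_mono src tgt c b a hab)) w
  rw [fire_cast src tgt c a ha] at h1
  rw [fire_cast src tgt c b hb] at h2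
  omega

/-- Integer count vector of a list. -/
def cnt (l : List V) : V → ℤ := fun v => (l.count v : ℤ)

theorem cnt_cons (a : V) (l : List V) : cnt (a :: l) = cnt l + Pi.single a 1 := by
  funext v
  by_cases h : v = a
  · subst h; simp [cnt]
  · simp [cnt, Pi.single_apply, h, List.count_cons, Ne.symm h]

theorem legal_end (src tgt : E → V) (l : List V) : ∀ (c d : V → ℕ), LegalSeq src tgt l c d →
    ∀ v, (d v : ℤ) = c v - lapApply src tgt (cnt l) v := by
  induction l with
  | nil =>
    intro c d h v
    have h : d = c := h
    subst h
    simp [cnt, lapApply]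
  | cons a l ih =>
    intro c d h v
    obtain ⟨h1, h2⟩ := h
    rw [ih _ _ h2 v, fire_cast src tgt c a h1, cnt_cons, lapApply_add]
    simp only [Pi.add_apply]
    ring

theorem legal_append (src tgt : E → V) (l₁ l₂ : List V) : ∀ (c d e : V → ℕ),
    LegalSeq src tgt l₁ c d → LegalSeq src tgt l₂ d e → LegalSeq src tgt (l₁ ++ l₂) c e := by
  induction l₁ with
  | nil =>
    intro c d e h h'
    have h : d = c := h
    subst h
    exact h'
  | cons a l ih =>
    intro c d e h h'
    exact ⟨h.1, ih _ _ _ h.2 h'⟩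

theorem legal_reach (src tgt : E → V) (l : List V) : ∀ (c d : V → ℕ),
    LegalSeq src tgt l c d → Reach src tgt c d := by
  induction l with
  | nil =>
    intro c d h
    have h : d = c := h
    subst h
    exact Relation.ReflTransGen.refl
  | cons a l ih =>
    intro c d h
    exact Relation.ReflTransGen.head ⟨a, h.1, rfl⟩ (ih _ _ h.2)

theorem reach_legal (src tgt : E → V) (c d : V → ℕ) (h : Reach src tgt c d) :
    ∃ l : List V, LegalSeq src tgt l c d := by
  induction h with
  | refl => exact ⟨[], rfl⟩
  | tail _ h ih =>
    obtain ⟨l, hl⟩ := ih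
    obtain ⟨v, hv, rfl⟩ := h
    exact ⟨l ++ [v], legal_append src tgt _ _ _ _ _ hl ⟨hv, rfl⟩⟩

theorem legal_erase (src tgt : E → V) (a : V) (l : List V) : ∀ (c d : V → ℕ),
    LegalSeq src tgt l c d → outdeg src a ≤ c a → a ∈ l →
    LegalSeq src tgt (l.erase a) (fire src tgt c a) d := by
  induction l with
  | nil => intro c d _ _ h; simp at h
  | cons b l ih =>
    intro c d h ha hm
    by_cases hab : b = a
    · subst hab
      simpa using h.2
    · rw [List.erase_cons_tail (by simpa using hab)]
      have hm' : a ∈ l := by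
        rcases List.mem_cons.1 hm with h | h
        · exact absurd h.symm hab
        · exact h
      refine ⟨h.1.trans (fire_mono src tgt c a b hab), ?_⟩
      rw [fire_comm src tgt c a b (Ne.symm hab) ha h.1]
      exact ih _ _ h.2 (ha.trans (fire_mono src tgt c b a (Ne.symm hab))) hm'

theorem exists_legal (src tgt : E → V) (l : List V) : ∀ (c d : V → ℕ) (m : V → ℤ),
    LegalSeq src tgt l c d → (∀ v, 0 ≤ m v) → (∀ v, m v ≤ cnt l v) → (∃ v, m v < cnt l v) →
    ∃ v, m v < cnt l v ∧ (outdeg src v : ℤ) ≤ c v - lapApply src tgt m v := by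
  induction l with
  | nil =>
    rintro c d m _ h0 _ ⟨v, hv⟩
    have := h0 v
    simp [cnt] at hv
    omega
  | cons a l ih =>
    rintro c d m hl h0 h1 ⟨v, hv⟩
    by_cases ha : m a = 0
    · refine ⟨a, by simp [ha, cnt], ?_⟩
      have h2 : 0 ≤ ∑ w : V, (numEdges src tgt w a : ℤ) * m w :=
        Finset.sum_nonneg fun w _ => mul_nonneg (by positivity) (h0 w)
      have h3 : (outdeg src a : ℤ) ≤ c a := by exact_mod_cast hl.1
      simp only [lapApply, ha]
      linarith
    · have hp : 1 ≤ m a := by have := h0 a; omega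
      obtain ⟨m', rfl⟩ : ∃ m', m = m' + Pi.single a 1 := ⟨m - Pi.single a 1, by simp⟩
      simp only [cnt_cons, Pi.add_apply, add_le_add_iff_right, add_lt_add_iff_right] at *
      obtain ⟨w, hw, hw'⟩ := ih _ _ m' hl.2 (by
        intro x
        by_cases hx : x = a
        · subst hx; simpa using hp
        · have := h0 x
          simpa [Pi.single_apply, hx] using this) h1 ⟨v, hv⟩
      refine ⟨w, hw, ?_⟩
      rw [fire_cast src tgt c a hl.1] at hw'
      rw [lapApply_add]
      simp only [Pi.add_apply]
      linarith

theorem cnt_sum (l : List V) : ∑ v : V, l.count v = l.length := by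
  simpa using Multiset.sum_count_eq_card (s := Finset.univ) (m := (l : Multiset V)) (by simp)

theorem burn_forward [Nonempty V] (src tgt : E → V) (r : V → ℕ)
    (hr : IsPeriodVector src tgt r) (c : V → ℕ) (l : List V) (hne : l ≠ [])
    (hl : LegalSeq src tgt l c c) :
    ∃ l : List V, LegalSeq src tgt l c c ∧ ∀ v : V, l.count v = r v := by
  obtain ⟨hpos, _, hker, hgen⟩ := hr
  obtain ⟨k, hk⟩ := hgen (cnt l) (by
    funext v
    have := legal_end src tgt l c c hl v
    simp only [Pi.zero_apply]
    omega)
  have hk1 : 1 ≤ k := by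
    obtain ⟨a, ha⟩ := List.exists_mem_of_ne_nil l hne
    have h1 : 0 < l.count a := List.count_pos_iff.2 ha
    have h2 : (l.count a : ℤ) = k * r a := by simpa [cnt] using congrFun hk a
    have h3 := hpos a
    by_contra hcon
    have : k * (r a : ℤ) ≤ 0 := mul_nonpos_of_nonpos_of_nonneg (by omega) (by positivity)
    omega
  have key : ∀ N : ℕ, N ≤ ∑ v, r v → ∃ (l' : List V) (d : V → ℕ), LegalSeq src tgt l' c d ∧
      (∀ v, l'.count v ≤ r v) ∧ l'.length = N := by
    intro N
    induction N with
    | zero => exact fun _ => ⟨[], c, rfl, by simp, rfl⟩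
    | succ N ih =>
      intro hN
      obtain ⟨l', d, hl', hle, hlen⟩ := ih (by omega)
      obtain ⟨v, hv⟩ : ∃ v, l'.count v < r v := by
        by_contra! hcon
        have := Finset.sum_le_sum (s := Finset.univ) fun v _ => hcon v
        rw [cnt_sum] at this
        omega
      have hc : ∀ x, cnt l x = k * r x := fun x => by simpa using congrFun hk x
      have hm : ∀ x, (cnt l' + (k - 1) • fun v => (r v : ℤ)) x
          = (l'.count x : ℤ) + (k - 1) * r x := fun x => by simp [cnt]
      obtain ⟨w, hw, hw'⟩ := exists_legal src tgt l c c
        (cnt l' + (k - 1) • fun v => (r v : ℤ)) hl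
        (by
          intro x
          rw [hm]
          have : 0 ≤ (k - 1) * (r x : ℤ) := mul_nonneg (by omega) (by positivity)
          omega)
        (by
          intro x
          rw [hm, hc]
          have := hle x
          have h2 : (k - 1) * (r x : ℤ) = k * r x - r x := by ring
          omega)
        ⟨v, by
          rw [hm, hc]
          have h2 : (k - 1) * (r v : ℤ) = k * r v - r v := by ring
          omega⟩
      rw [hm, hc] at hw
      have h2 : (k - 1) * (r w : ℤ) = k * r w - r w := by ring
      have hlt : l'.count w < r w := by omega
      rw [lapApply_add, lapApply_zsmul, hker] at hw'
      simp only [smul_zero, add_zero] at hw'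
      rw [← legal_end src tgt l' c d hl' w] at hw'
      refine ⟨l' ++ [w], fire src tgt d w, legal_append src tgt _ _ _ _ _ hl'
        ⟨by exact_mod_cast hw', rfl⟩, ?_, by simp [hlen]⟩
      intro x
      rw [List.count_append]
      by_cases hx : x = w
      · subst hx
        simp
        omega
      · have := hle x
        simpa [List.count_cons, Ne.symm hx] using this
  obtain ⟨l', d, hl', hle, hlen⟩ := key _ le_rfl
  have heq : ∀ v, l'.count v = r v := by
    rw [← cnt_sum] at hlen
    exact fun v => (Finset.sum_eq_sum_iff_of_le fun v _ => hle v).1 hlen v (Finset.mem_univ v)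
  have hd : d = c := by
    funext v
    have h := legal_end src tgt l' c d hl' v
    have hcn : cnt l' = fun v => (r v : ℤ) := by
      funext v; simp [cnt, heq]
    rw [hcn, hker] at h
    simpa using h
  subst hd
  exact ⟨l', hl', heq⟩

theorem burn_backward (src tgt : E → V) (r : V → ℕ) (hpos : ∀ v, 0 < r v) (c d : V → ℕ)
    (hc : ∃ l : List V, LegalSeq src tgt l c c ∧ ∀ v : V, l.count v = r v)
    (h : Reach src tgt c d) :
    (∃ l : List V, LegalSeq src tgt l d d ∧ ∀ v : V, l.count v = r v) ∧ Reach src tgt d c := by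
  induction h with
  | refl => exact ⟨hc, Relation.ReflTransGen.refl⟩
  | tail _ h ih =>
    obtain ⟨⟨l, hl, hcount⟩, hback⟩ := ih
    obtain ⟨v, hv, rfl⟩ := h
    have hm : v ∈ l := List.count_pos_iff.1 (by rw [hcount]; exact hpos v)
    have he := legal_erase src tgt v l _ _ hl hv hm
    refine ⟨⟨l.erase v ++ [v], legal_append src tgt _ _ _ _ _ he ⟨hv, rfl⟩, ?_⟩,
      (legal_reach src tgt _ _ _ he).trans hback⟩
    intro x
    rw [← hcount x]
    exact ((List.perm_append_comm).trans (List.perm_cons_erase hm).symm).count_eq x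

/-- Burning test for the sinkless sandpile model. A chip configuration
`c` is recurrent iff there is a finite sequence of legal firing moves from `c` back to
`c` in which every vertex `v` is fired exactly `r(v)` times, `r` being the primitive
period vector. -/
theorem burning_test_sinkless [Nonempty V] (src tgt : E → V)
    (hG : StronglyConnected src tgt) (r : V → ℕ) (hr : IsPeriodVector src tgt r)
    (c : V → ℕ) :
    Recurrent src tgt c ↔
      ∃ l : List V, LegalSeq src tgt l c c ∧ ∀ v : V, l.count v = r v := by
  constructor
  · rintro ⟨hns, hrec⟩
    simp only [Stable, not_forall, not_lt] at hns
    obtain ⟨v, hv⟩ := hns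
    obtain ⟨l, hl⟩ := reach_legal src tgt _ _
      (hrec _ (Relation.ReflTransGen.single ⟨v, hv, rfl⟩))
    exact burn_forward src tgt r hr c (v :: l) (by simp) ⟨hv, hl⟩
  · intro hc
    refine ⟨?_, fun d hd => (burn_backward src tgt r hr.1 c d hc hd).2⟩
    intro hst
    obtain ⟨l, hl, hcount⟩ := hc
    cases l with
    | nil =>
      have h1 := hr.1 (Classical.arbitrary V)
      have h2 := hcount (Classical.arbitrary V)
      simp at h2
      omega
    | cons a l => exact absurd hl.1 (not_le.2 (hst a))

end SandpileBM
end

section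
/- Let c and d be chip configurations and suppose c ⤳ d via a finite sequence of legal firing moves in which the vertex s is fired exactly m times. Then ĉ + m·β_s ⤳_s d̂, i.e. the associated sequence of s-firing moves (obtained by omitting the firings of s) is legal for ĉ + m·β_s and leads to d̂, where ĉ and d̂ are the restrictions of c and d to V∖{s}. -/
open Finset Polynomial

namespace SandpileBM

variable {V E : Type} [Fintype V] [DecidableEq V] [Fintype E] [DecidableEq E]

/-- A legal firing sequence from `c` to `d` in the sinkless model, in
which `s` is fired exactly `m` times, induces (by omitting the firings of `s`) a legal
s-firing sequence from `ĉ + m·β_s` to `d̂`. -/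
theorem legalSeq_restricts [Nonempty V] (src tgt : E → V)
    (hG : StronglyConnected src tgt) (s : V) (l : List V) (c d : V → ℕ)
    (h : LegalSeq src tgt l c d) :
    SLegalSeq src tgt s
      (l.filterMap fun v => if hv : v = s then none else some (⟨v, hv⟩ : {v : V // v ≠ s}))
      (restrictS s c + l.count s • betaS src tgt s) (restrictS s d) := by
  induction l generalizing c with
  | nil =>
    have h' : d = c := h
    subst h'
    simp [SLegalSeq]
  | cons v l ih =>
    obtain ⟨h1, h2⟩ := h
    have key := ih _ h2
    by_cases hv : v = s
    · subst hv
      have e : restrictS v (fire src tgt c v) + l.count v • betaS src tgt v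
          = restrictS v c + (v :: l).count v • betaS src tgt v := by
        funext w
        have hw : w.1 ≠ v := w.2
        simp [restrictS, fire, betaS, hw]
        ring
      rw [e] at key
      simpa using key
    · have e : restrictS s (fire src tgt c v) + l.count s • betaS src tgt s
          = sfire src tgt s (restrictS s c + (v :: l).count s • betaS src tgt s) ⟨v, hv⟩ := by
        funext w
        by_cases hw : w.1 = v
        · have hw' : w = ⟨v, hv⟩ := Subtype.ext hw
          subst hw'
          simp [restrictS, fire, sfire, betaS, List.count_cons_of_ne hv]
          omega
        · have hw' : w ≠ ⟨v, hv⟩ := fun hh => hw (congrArg Subtype.val hh)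
          simp [restrictS, fire, sfire, betaS, hw, hw', List.count_cons_of_ne hv]
          omega
      rw [e] at key
      rw [List.filterMap_cons_some (b := (⟨v, hv⟩ : {v : V // v ≠ s})) (by simp [hv])]
      refine ⟨?_, key⟩
      simp only [restrictS, Pi.add_apply]
      omega

end SandpileBM
end

section
/- If c is a recurrent chip configuration, then the stabilization (ĉ)° of its restriction ĉ is an s-recurrent configuration. Moreover, if c and d are recurrent chip configurations with c ~ d, then (ĉ)° ~_s (d̂)°. -/
open Finset Polynomial

namespace SandpileBM

variable {V E : Type} [Fintype V] [DecidableEq V] [Fintype E] [DecidableEq E]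

lemma sum_numEdges (src tgt : E → V) (v : V) : ∑ w, numEdges src tgt v w = outdeg src v := by
  unfold numEdges outdeg
  rw [Finset.card_eq_sum_card_fiberwise (f := tgt) (t := Finset.univ) (by intro x _; simp)]
  simp [Finset.filter_filter]

lemma numEdges_pos (src tgt : E → V) (e : E) : 1 ≤ numEdges src tgt (src e) (tgt e) := by
  unfold numEdges
  exact Finset.card_pos.mpr ⟨e, by simp⟩

lemma outdeg_le (src : E → V) (v : V) : outdeg src v ≤ Fintype.card E := Finset.card_le_univ _

/-- There is a walk of length `n` from `v` to `s`. -/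
def WalkLen (src tgt : E → V) (s : V) : ℕ → V → Prop
  | 0, v => v = s
  | n + 1, v => ∃ e, src e = v ∧ WalkLen src tgt s n (tgt e)

/-- A function decreasing along some edge out of every vertex other than `s`. -/
lemma exists_dist (src tgt : E → V) (hG : StronglyConnected src tgt) (s : V) :
    ∃ d : V → ℕ, ∀ v, v ≠ s → ∃ e, src e = v ∧ d (tgt e) < d v := by
  classical
  have hP : ∀ v, ∃ n, WalkLen src tgt s n v := by
    intro v
    refine Relation.ReflTransGen.head_induction_on (hG v s) ⟨0, rfl⟩ ?_
    rintro a b ⟨e, he, rfl⟩ _ ⟨n, hn⟩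
    exact ⟨n + 1, e, he, hn⟩
  refine ⟨fun v => Nat.find (hP v), fun v hv => ?_⟩
  have h := Nat.find_spec (hP v)
  rcases hn : Nat.find (hP v) with _ | n
  · rw [hn] at h
    exact absurd h hv
  · rw [hn] at h
    obtain ⟨e, he, hp⟩ := h
    have hle : Nat.find (hP (tgt e)) ≤ n := Nat.find_min' _ hp
    refine ⟨e, he, ?_⟩
    show Nat.find (hP (tgt e)) < Nat.find (hP v)
    omega

lemma exists_weight (src tgt : E → V) (hG : StronglyConnected src tgt) (s : V) :
    ∃ wt : V → ℕ, ∀ v, v ≠ s → ∑ w, numEdges src tgt v w * wt w < outdeg src v * wt v := by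
  obtain ⟨d, hd⟩ := exists_dist src tgt hG s
  set D := Finset.univ.sup d with hD
  have hdD : ∀ v, d v ≤ D := fun v => Finset.le_sup (Finset.mem_univ v)
  set N := Fintype.card E + 1 with hN
  let g : V → ℕ := fun v => N ^ (D - d v)
  have hg : ∀ v, g v ≤ N ^ D := fun v => Nat.pow_le_pow_right (by omega) (by omega)
  refine ⟨fun v => N ^ D - g v, fun v hv => ?_⟩
  obtain ⟨e, rfl, he⟩ := hd v hv
  have h1 : ∑ w, numEdges src tgt (src e) w * (N ^ D - g w)
      + ∑ w, numEdges src tgt (src e) w * g w = outdeg src (src e) * N ^ D := by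
    rw [← sum_numEdges src tgt, Finset.sum_mul, ← Finset.sum_add_distrib]
    refine Finset.sum_congr rfl fun w _ => ?_
    rw [← mul_add, Nat.sub_add_cancel (hg w)]
  have h2 : g (tgt e) ≤ ∑ w, numEdges src tgt (src e) w * g w := by
    refine le_trans ?_ (Finset.single_le_sum
      (f := fun w => numEdges src tgt (src e) w * g w) (fun _ _ => Nat.zero_le _)
      (Finset.mem_univ (tgt e)))
    exact Nat.le_mul_of_pos_left _ (numEdges_pos src tgt e)
  have h3 : N * g (src e) ≤ g (tgt e) := by
    have := hdD (src e)
    show N * N ^ _ ≤ N ^ _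
    rw [← pow_succ']
    exact Nat.pow_le_pow_right (by omega) (by omega)
  have h4 : outdeg src (src e) * g (src e) < N * g (src e) := by
    refine Nat.mul_lt_mul_of_pos_right ?_ (Nat.pow_pos (by omega))
    have := outdeg_le src (src e)
    omega
  have h5 : outdeg src (src e) * (N ^ D - g (src e)) + outdeg src (src e) * g (src e)
      = outdeg src (src e) * N ^ D := by
    rw [← mul_add, Nat.sub_add_cancel (hg _)]
  show ∑ w, numEdges src tgt (src e) w * (N ^ D - g w) < outdeg src (src e) * (N ^ D - g (src e))
  omega

lemma sfire_add (src tgt : E → V) (s : V) (c : {v : V // v ≠ s} → ℕ) (v : {v : V // v ≠ s})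
    (h : outdeg src v.1 ≤ c v) (w : {v : V // v ≠ s}) :
    sfire src tgt s c v w + (if w = v then outdeg src v.1 else 0)
      = c w + numEdges src tgt v.1 w.1 := by
  unfold sfire
  split_ifs with hw
  · subst hw; omega
  · omega

/-- A potential strictly decreasing under legal `s`-firing. -/
lemma exists_potential (src tgt : E → V) (hG : StronglyConnected src tgt) (s : V) :
    ∃ Φ : ({v : V // v ≠ s} → ℕ) → ℕ, ∀ c d, SFireStep src tgt s c d → Φ d < Φ c := by
  obtain ⟨wt, hwt⟩ := exists_weight src tgt hG s
  refine ⟨fun c => ∑ w, c w * wt w.1, ?_⟩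
  rintro c d ⟨v, hv, rfl⟩
  have h1 : ∑ w, sfire src tgt s c v w * wt w.1 + outdeg src v.1 * wt v.1
      = ∑ w, c w * wt w.1 + ∑ w : {v : V // v ≠ s}, numEdges src tgt v.1 w.1 * wt w.1 := by
    rw [← Finset.sum_add_distrib]
    simp_rw [← add_mul, ← sfire_add src tgt s c v hv, add_mul, Finset.sum_add_distrib]
    simp
  have h2 : ∑ w : {v : V // v ≠ s}, numEdges src tgt v.1 w.1 * wt w.1
      ≤ ∑ w, numEdges src tgt v.1 w * wt w := by
    rw [← Fintype.sum_subtype_add_sum_subtype (fun w => w ≠ s)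
      (fun w => numEdges src tgt v.1 w * wt w)]
    exact Nat.le_add_right _ _
  have h3 := hwt v.1 v.2
  show ∑ w, sfire src tgt s c v w * wt w.1 < ∑ w, c w * wt w.1
  omega

lemma exists_stab (src tgt : E → V) (hG : StronglyConnected src tgt) (s : V)
    (c : {v : V // v ≠ s} → ℕ) : ∃ d, SReach src tgt s c d ∧ SStable src s d := by
  obtain ⟨Φ, hΦ⟩ := exists_potential src tgt hG s
  induction hn : Φ c using Nat.strong_induction_on generalizing c with
  | _ n ih =>
    by_cases hc : SStable src s c
    · exact ⟨c, Relation.ReflTransGen.refl, hc⟩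
    · unfold SStable at hc
      push Not at hc
      obtain ⟨v, hv⟩ := hc
      have hs : SFireStep src tgt s c (sfire src tgt s c v) := ⟨v, hv, rfl⟩
      obtain ⟨d, hd, hd'⟩ := ih _ (hn ▸ hΦ _ _ hs) _ rfl
      exact ⟨d, Relation.ReflTransGen.head hs hd, hd'⟩

lemma sfire_diamond (src tgt : E → V) (s : V) (c a b : {v : V // v ≠ s} → ℕ)
    (ha : SFireStep src tgt s c a) (hb : SFireStep src tgt s c b) :
    ∃ d, Relation.ReflGen (SFireStep src tgt s) a d ∧
      Relation.ReflTransGen (SFireStep src tgt s) b d := by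
  obtain ⟨u, hu, rfl⟩ := ha
  obtain ⟨v, hv, rfl⟩ := hb
  by_cases huv : u = v
  · subst huv
    exact ⟨_, Relation.ReflGen.refl, Relation.ReflTransGen.refl⟩
  have h1 : outdeg src v.1 ≤ sfire src tgt s c u v := by
    have := sfire_add src tgt s c u hu v
    rw [if_neg (Ne.symm huv)] at this
    omega
  have h2 : outdeg src u.1 ≤ sfire src tgt s c v u := by
    have := sfire_add src tgt s c v hv u
    rw [if_neg huv] at this
    omega
  refine ⟨sfire src tgt s (sfire src tgt s c u) v, Relation.ReflGen.single ⟨v, h1, rfl⟩,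
    Relation.ReflTransGen.single ⟨u, h2, ?_⟩⟩
  funext w
  have e1 := sfire_add src tgt s _ v h1 w
  have e2 := sfire_add src tgt s _ u h2 w
  have e3 := sfire_add src tgt s c u hu w
  have e4 := sfire_add src tgt s c v hv w
  omega

lemma stable_reach_eq {src tgt : E → V} {s : V} {c d : {v : V // v ≠ s} → ℕ}
    (hc : SStable src s c) (h : SReach src tgt s c d) : d = c := by
  rcases Relation.ReflTransGen.cases_head h with h | ⟨e, ⟨v, hv, _⟩, _⟩
  · exact h.symm
  · exact absurd hv (not_le.mpr (hc v))

lemma stab_unique (src tgt : E → V) (s : V) (c a b : {v : V // v ≠ s} → ℕ)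
    (ha : SReach src tgt s c a) (hb : SReach src tgt s c b)
    (hsa : SStable src s a) (hsb : SStable src s b) : a = b := by
  obtain ⟨d, hd1, hd2⟩ := Relation.church_rosser (sfire_diamond src tgt s) ha hb
  rw [← stable_reach_eq hsa hd1, ← stable_reach_eq hsb hd2]

lemma stab_spec (src tgt : E → V) (hG : StronglyConnected src tgt) (s : V)
    (c : {v : V // v ≠ s} → ℕ) :
    SReach src tgt s c (stab src tgt s c) ∧ SStable src s (stab src tgt s c) :=
  Classical.epsilon_spec (exists_stab src tgt hG s c)

lemma stab_eq_of_reach (src tgt : E → V) (hG : StronglyConnected src tgt) (s : V)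
    {c d : {v : V // v ≠ s} → ℕ} (h : SReach src tgt s c d) :
    stab src tgt s c = stab src tgt s d :=
  stab_unique src tgt s c _ _ (stab_spec src tgt hG s c).1
    (Relation.ReflTransGen.trans h (stab_spec src tgt hG s d).1)
    (stab_spec src tgt hG s c).2 (stab_spec src tgt hG s d).2

lemma sreach_add_right {src tgt : E → V} {s : V} {c d : {v : V // v ≠ s} → ℕ}
    (h : SReach src tgt s c d) (a : {v : V // v ≠ s} → ℕ) :
    SReach src tgt s (c + a) (d + a) := by
  refine Relation.ReflTransGen.lift (fun c => c + a) ?_ _ _ h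
  rintro c d ⟨v, hv, rfl⟩
  have hv' : outdeg src v.1 ≤ (c + a) v := le_trans hv (Nat.le_add_right _ _)
  refine ⟨v, hv', ?_⟩
  funext w
  have e1 := sfire_add src tgt s _ v hv w
  have e2 := sfire_add src tgt s _ v hv' w
  simp only [Pi.add_apply] at e2 ⊢
  omega

lemma sreach_add {src tgt : E → V} {s : V} {c d a b : {v : V // v ≠ s} → ℕ}
    (h : SReach src tgt s c d) (h' : SReach src tgt s a b) :
    SReach src tgt s (c + a) (d + b) := by
  refine Relation.ReflTransGen.trans (sreach_add_right h a) ?_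
  rw [add_comm d a, add_comm d b]
  exact sreach_add_right h' d

lemma fireStep_restrict (src tgt : E → V) (s : V) {c d : V → ℕ} (h : FireStep src tgt c d) :
    restrictS s d = restrictS s c + betaS src tgt s ∨
      SFireStep src tgt s (restrictS s c) (restrictS s d) := by
  obtain ⟨v, hv, rfl⟩ := h
  by_cases hs : v = s
  · left
    subst hs
    funext w
    simp [restrictS, fire, betaS, w.2]
  · right
    refine ⟨⟨v, hs⟩, hv, ?_⟩
    funext w
    simp [restrictS, fire, sfire, Subtype.ext_iff]

lemma reach_restrict (src tgt : E → V) (s : V) {c d : V → ℕ} (h : Reach src tgt c d) :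
    ∃ k : ℕ, SReach src tgt s (restrictS s c + k • betaS src tgt s) (restrictS s d) := by
  induction h with
  | refl => exact ⟨0, by rw [zero_smul, add_zero]; exact Relation.ReflTransGen.refl⟩
  | @tail a b _ hs ih =>
    obtain ⟨k, hk⟩ := ih
    rcases fireStep_restrict src tgt s hs with h | h
    · refine ⟨k + 1, ?_⟩
      rw [h, succ_nsmul, ← add_assoc]
      exact sreach_add_right hk _
    · exact ⟨k, Relation.ReflTransGen.tail hk h⟩

/-- Firing `v` repeatedly puts many chips on an out-neighbour. -/
lemma fire_many (src tgt : E → V) (s : V) (v w : {v : V // v ≠ s}) (hvw : w ≠ v)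
    (hA : 1 ≤ numEdges src tgt v.1 w.1) (K : ℕ) :
    ∀ c : {v : V // v ≠ s} → ℕ, K * outdeg src v.1 ≤ c v →
      ∃ d, SReach src tgt s c d ∧ c w + K ≤ d w := by
  induction K with
  | zero => exact fun c _ => ⟨c, Relation.ReflTransGen.refl, by simp⟩
  | succ K ih =>
    intro c hc
    rw [add_mul, one_mul] at hc
    have hv : outdeg src v.1 ≤ c v := by omega
    have e1 := sfire_add src tgt s c v hv v
    have e2 := sfire_add src tgt s c v hv w
    rw [if_pos rfl] at e1
    rw [if_neg hvw] at e2
    obtain ⟨d, hd, hd'⟩ := ih (sfire src tgt s c v) (by omega)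
    exact ⟨d, Relation.ReflTransGen.head ⟨v, hv, rfl⟩ hd, by omega⟩

lemma beta_reach_point (src tgt : E → V) (hG : StronglyConnected src tgt) (s : V)
    (v : V) (hv : v ≠ s) (K : ℕ) :
    ∃ (N : ℕ) (d : {v : V // v ≠ s} → ℕ),
      SReach src tgt s (N • betaS src tgt s) d ∧ K ≤ d ⟨v, hv⟩ := by
  have h := hG s v
  induction h generalizing K with
  | refl => exact absurd rfl hv
  | @tail a b _ hs ih =>
    obtain ⟨e, rfl, rfl⟩ := hs
    have hA := numEdges_pos src tgt e
    by_cases has : src e = s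
    · refine ⟨K, _, Relation.ReflTransGen.refl, ?_⟩
      simp only [Pi.smul_apply, betaS, smul_eq_mul]
      rw [has] at hA
      exact Nat.le_mul_of_pos_right _ hA
    · by_cases hab : tgt e = src e
      · obtain ⟨N, d, h1, h2⟩ := ih has K
        refine ⟨N, d, h1, ?_⟩
        simpa [hab] using h2
      · obtain ⟨N, d, h1, h2⟩ := ih has (K * outdeg src (src e))
        obtain ⟨d', h3, h4⟩ := fire_many src tgt s ⟨src e, has⟩ ⟨tgt e, hv⟩
          (by simpa using hab) hA K d h2
        exact ⟨N, d', Relation.ReflTransGen.trans h1 h3, by omega⟩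

lemma beta_reach_all (src tgt : E → V) (hG : StronglyConnected src tgt) (s : V)
    (c₁ : {v : V // v ≠ s} → ℕ) :
    ∃ (N : ℕ) (d : {v : V // v ≠ s} → ℕ),
      SReach src tgt s (N • betaS src tgt s) d ∧ c₁ ≤ d := by
  suffices H : ∀ S : Finset {v : V // v ≠ s}, ∃ (N : ℕ) (d : {v : V // v ≠ s} → ℕ),
      SReach src tgt s (N • betaS src tgt s) d ∧ ∀ v ∈ S, c₁ v ≤ d v by
    obtain ⟨N, d, h1, h2⟩ := H Finset.univ
    exact ⟨N, d, h1, fun v => h2 v (Finset.mem_univ v)⟩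
  intro S
  induction S using Finset.induction_on with
  | empty => exact ⟨0, _, Relation.ReflTransGen.refl, by simp⟩
  | insert v S _ ih =>
    obtain ⟨N, d, h1, h2⟩ := ih
    obtain ⟨M, e, h3, h4⟩ := beta_reach_point src tgt hG s v.1 v.2 (c₁ v)
    refine ⟨N + M, d + e, ?_, ?_⟩
    · rw [add_smul]
      exact sreach_add h1 h3
    · intro w hw
      rcases Finset.mem_insert.mp hw with rfl | hw
      · exact le_trans h4 (Nat.le_add_left _ _)
      · exact le_trans (h2 w hw) (Nat.le_add_right _ _)

lemma sreach_loop_mul {src tgt : E → V} {s : V} {c b : {v : V // v ≠ s} → ℕ}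
    (h : SReach src tgt s (c + b) c) (m : ℕ) : SReach src tgt s (c + m • b) c := by
  induction m with
  | zero => rw [zero_smul, add_zero]; exact Relation.ReflTransGen.refl
  | succ m ih =>
    rw [succ_nsmul, ← add_assoc]
    exact Relation.ReflTransGen.trans (sreach_add_right ih b) h

lemma recurrent_loop (src tgt : E → V) (hG : StronglyConnected src tgt) (s : V) (c : V → ℕ)
    (hc : Recurrent src tgt c) :
    ∃ k : ℕ, SReach src tgt s (restrictS s c + (k + 1) • betaS src tgt s) (restrictS s c) := by
  obtain ⟨h1, h2⟩ := hc
  unfold Stable at h1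
  push Not at h1
  obtain ⟨v, hv⟩ := h1
  have hs : FireStep src tgt c (fire src tgt c v) := ⟨v, hv, rfl⟩
  obtain ⟨k, hk⟩ := reach_restrict src tgt s (h2 _ (Relation.ReflTransGen.single hs))
  rcases fireStep_restrict src tgt s hs with h | h
  · refine ⟨k, ?_⟩
    rwa [h, add_assoc, ← succ_nsmul'] at hk
  · rcases k with _ | k
    · exfalso
      rw [zero_smul, add_zero] at hk
      obtain ⟨Φ, hΦ⟩ := exists_potential src tgt hG s
      have hle : ∀ a b, SReach src tgt s a b → Φ b ≤ Φ a := by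
        intro a b hab
        induction hab with
        | refl => exact le_rfl
        | tail _ hst ih => exact le_trans (hΦ _ _ hst).le ih
      exact absurd (hle _ _ hk) (not_le.mpr (hΦ _ _ h))
    · exact ⟨k, Relation.ReflTransGen.trans
        (sreach_add_right (Relation.ReflTransGen.single h) _) hk⟩

/-- If `c` is recurrent then `(ĉ)°` is s-recurrent; moreover if `c ~ d`
for recurrent `c`, `d` then `(ĉ)° ~_s (d̂)°`. -/
theorem stab_restrict_sRecurrent [Nonempty V] (src tgt : E → V)
    (hG : StronglyConnected src tgt) (s : V) :
    (∀ c : V → ℕ, Recurrent src tgt c →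
      SRecurrent src tgt s (stab src tgt s (restrictS s c))) ∧
    (∀ c d : V → ℕ, Recurrent src tgt c → Recurrent src tgt d → Reach src tgt c d →
      SEquiv src tgt s (stab src tgt s (restrictS s c)) (stab src tgt s (restrictS s d))) := by
  constructor
  · intro c hc c₁
    obtain ⟨k, hk⟩ := recurrent_loop src tgt hG s c hc
    obtain ⟨N, d, hN, hd⟩ := beta_reach_all src tgt hG s c₁
    have h1 := sreach_loop_mul hk N
    have h2 : SReach src tgt s (restrictS s c + N • (k + 1) • betaS src tgt s)
        (d + (restrictS s c + (N * k) • betaS src tgt s)) := by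
      have := sreach_add_right hN (restrictS s c + (N * k) • betaS src tgt s)
      convert this using 1
      rw [smul_smul, mul_add, mul_one, add_smul]
      abel
    refine ⟨(d - c₁) + (restrictS s c + (N * k) • betaS src tgt s), ?_⟩
    rw [← add_assoc, add_tsub_cancel_of_le hd, ← stab_eq_of_reach src tgt hG s h2,
      stab_eq_of_reach src tgt hG s h1]
  · intro c d _ _ hcd
    obtain ⟨k, hk⟩ := reach_restrict src tgt s hcd
    refine ⟨k, ?_⟩
    rw [← stab_eq_of_reach src tgt hG s hk]
    exact (stab_eq_of_reach src tgt hG s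
      (sreach_add_right (stab_spec src tgt hG s (restrictS s c)).1 _)).symm

end SandpileBM
end
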